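/- arXiv:2002.00598 — 6 statements merged into one kernel-verified Lean document; each statement's English description precedes it below -/
import Mathlib

section
/- For every real number μ > 1, setting γ = (1+√μ)/(μ−1), there exists a unique x > 0 such that F(γ, x) = 2. (Equivalently, for every charge μ > 1 the moduli space M(μ) = F_{γ(μ)}^{-1}(2) of simple regularized unparametrized frozen-planet orbits with mean electron interaction consists of exactly one point.) -/
open Real intervalIntegral

/-- `σ⁺(γ,x) = 2 − γ²x + √((2−γ²x)² + 4(γ+1)²)`. -/
noncomputable def sigmaPlus (γ x : ℝ) : ℝ :=
  2 - γ ^ 2 * x + Real.sqrt ((2 - γ ^ 2 * x) ^ 2 + 4 * (γ + 1) ^ 2)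

/-- `σ⁻(γ,x) = 2 − γ²x − √((2−γ²x)² + 4(γ+1)²)`. -/
noncomputable def sigmaMinus (γ x : ℝ) : ℝ :=
  2 - γ ^ 2 * x - Real.sqrt ((2 - γ ^ 2 * x) ^ 2 + 4 * (γ + 1) ^ 2)

/-- `F(γ,x) = σ⁺(γ,x) · (∫₀¹ r^{3/2}/√((1−r)(σ⁺ r − σ⁻)) dr) /
    (∫₀¹ r^{1/2}/√((1−r)(σ⁺ r − σ⁻)) dr)`. -/
noncomputable def F (γ x : ℝ) : ℝ :=
  sigmaPlus γ x *
    (∫ r in (0:ℝ)..1, r ^ ((3:ℝ)/2) /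
      Real.sqrt ((1 - r) * (sigmaPlus γ x * r - sigmaMinus γ x))) /
    (∫ r in (0:ℝ)..1, r ^ ((1:ℝ)/2) /
      Real.sqrt ((1 - r) * (sigmaPlus γ x * r - sigmaMinus γ x)))

/-- The lemniscatic constant `ϖ = 2∫₀¹ dt/√(1−t⁴)`. -/
noncomputable def varpi : ℝ := 2 * ∫ t in (0:ℝ)..1, 1 / Real.sqrt (1 - t ^ 4)

open MeasureTheory (volume ae_restrict_of_forall_mem)

/-!
The roots `σ⁺`, `σ⁻` satisfy `σ⁺σ⁻ = -c` with `c = 4(γ+1)²`, so `σ⁺r - σ⁻ = (σ⁺²r + c) / σ⁺`, and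
`F(γ, x)` depends on `x` only through `s = σ⁺(γ, x)`: it is `s` times the mean of `r` for the
weight `√r / √((1-r)(s²r+c))` on `[0, 1]`. The numerator of this quotient increases with `s` while
its denominator decreases, so the quotient is strictly increasing. As `r ≤ 1`, it is at most `s`; as
`√r / √(s²r+c)` increases with `r` and the weight `1/√(1-r)` has mean `2/3`, it is at least `2s/3`.
Hence the value `2` is attained at exactly one `s`, which lies in `[2, 3]`. Finally, `σ⁺(γ, x) = s`
is a linear equation in `x`, whose solution is positive when `s < 4`.
-/

lemma intervalIntegrable_inv_sqrt_sub {a b : ℝ} (hab : a ≤ b) :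
    IntervalIntegrable (fun r ↦ (√(b - r))⁻¹) volume a b := by
  have h : IntervalIntegrable (fun r : ℝ ↦ (b - r) ^ (-(1 / 2) : ℝ)) volume a b := by
    simpa using ((intervalIntegrable_rpow' (a := 0) (b := b - a) (r := -(1 / 2))
      (by norm_num)).comp_sub_left b).symm
  refine h.congr fun r hr ↦ ?_
  rw [Set.uIoc_of_le hab] at hr
  simp only [rpow_neg (sub_nonneg.2 hr.2), sqrt_eq_rpow]

lemma integral_sub_two_thirds_mul_inv_sqrt_one_sub :
    ∫ r in (0 : ℝ)..1, (r - 2 / 3) * (√(1 - r))⁻¹ = 0 := by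
  have hderiv : ∀ r ∈ Set.Ioo (0 : ℝ) 1,
      HasDerivAt (fun r ↦ -(2 / 3) * (r * √(1 - r))) ((r - 2 / 3) * (√(1 - r))⁻¹) r := by
    intro r hr
    have hr1 : 0 < 1 - r := sub_pos.2 hr.2
    have hsqrt : √(1 - r) ≠ 0 := (sqrt_pos.2 hr1).ne'
    refine (((hasDerivAt_id' r).mul (((hasDerivAt_id' r).const_sub 1).sqrt hr1.ne')).const_mul
      (-(2 / 3))).congr_deriv ?_
    field_simp
    rw [sq_sqrt hr1.le]
    ring
  rw [integral_eq_sub_of_hasDerivAt_of_le zero_le_one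
    (Continuous.continuousOn (by fun_prop)) hderiv
    ((intervalIntegrable_inv_sqrt_sub zero_le_one).continuousOn_mul (by fun_prop))]
  simp

lemma mul_integral_sub_mul_le_of_monotoneOn {a b m : ℝ} {w h : ℝ → ℝ} (hm : m ∈ Set.Ioo a b)
    (hw : ∀ r ∈ Set.Ioo a b, 0 ≤ w r) (hh : MonotoneOn h (Set.Ioo a b))
    (hwi : IntervalIntegrable (fun r ↦ (r - m) * w r) volume a b)
    (hwhi : IntervalIntegrable (fun r ↦ (r - m) * (w r * h r)) volume a b) :
    h m * ∫ r in a..b, (r - m) * w r ≤ ∫ r in a..b, (r - m) * (w r * h r) := by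
  rw [← integral_const_mul]
  refine integral_mono_on_of_le_Ioo (hm.1.trans hm.2).le (hwi.const_mul _) hwhi fun r hr ↦ ?_
  have hcross : 0 ≤ (r - m) * (h r - h m) := by
    rcases le_total r m with hrm | hmr
    · exact mul_nonneg_of_nonpos_of_nonpos (sub_nonpos.2 hrm) (sub_nonpos.2 (hh hr hm hrm))
    · exact mul_nonneg (sub_nonneg.2 hmr) (sub_nonneg.2 (hh hm hr hmr))
  linarith [mul_nonneg (hw r hr) hcross]

/-- The part of the integrands of `F` which is regular at `r = 1`, up to a factor independent of
`r`. Here `s` stands for `σ⁺` and `c` for `-σ⁺σ⁻ = 4(γ+1)²`. -/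
noncomputable def radialProfile (p c s r : ℝ) : ℝ :=
  r ^ p / √(s ^ 2 * r + c)

section radialProfile

variable {p c s t r : ℝ}

lemma radialProfile_pos (hc : 0 ≤ c) (hs : 0 < s) (hr : 0 < r) : 0 < radialProfile p c s r := by
  unfold radialProfile
  positivity

@[fun_prop]
lemma measurable_radialProfile : Measurable (radialProfile p c s) := by
  unfold radialProfile
  fun_prop

lemma radialProfile_add_one (hr : 0 < r) :
    radialProfile (p + 1) c s r = r * radialProfile p c s r := by
  rw [radialProfile, radialProfile, rpow_add_one hr.ne']
  ring

lemma radialProfile_half (hr : 0 ≤ r) :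
    radialProfile (1 / 2) c s r = √(r / (s ^ 2 * r + c)) := by
  rw [radialProfile, sqrt_div hr, ← sqrt_eq_rpow]

lemma radialProfile_eq_rpow_mul_half (hr : 0 < r) :
    radialProfile p c s r = r ^ (p - 1 / 2) * radialProfile (1 / 2) c s r := by
  rw [radialProfile, radialProfile, ← mul_div_assoc, ← rpow_add hr, sub_add_cancel]

lemma radialProfile_le_inv (hp : 1 / 2 ≤ p) (hc : 0 ≤ c) (hs : 0 < s) (hr : r ∈ Set.Ioc 0 1) :
    radialProfile p c s r ≤ s⁻¹ := by
  have hr0 : 0 < r := hr.1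
  have hhalf : radialProfile (1 / 2) c s r ≤ s⁻¹ := by
    rw [radialProfile_half hr0.le, sqrt_le_left (by positivity), inv_pow,
      div_le_iff₀ (by positivity), mul_add, inv_mul_cancel_left₀ (by positivity)]
    exact le_add_of_nonneg_right (by positivity)
  rw [radialProfile_eq_rpow_mul_half hr0]
  exact (mul_le_of_le_one_left (radialProfile_pos hc hs hr0).le
    (rpow_le_one hr0.le hr.2 (sub_nonneg.2 hp))).trans hhalf

lemma radialProfile_monotoneOn (hp : 1 / 2 ≤ p) (hc : 0 ≤ c) (hs : 0 < s) :
    MonotoneOn (radialProfile p c s) (Set.Ioi 0) := by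
  intro r (hr : 0 < r) r' (hr' : 0 < r') hrr'
  have hhalf : radialProfile (1 / 2) c s r ≤ radialProfile (1 / 2) c s r' := by
    rw [radialProfile_half hr.le, radialProfile_half hr'.le]
    refine sqrt_le_sqrt ?_
    rw [div_le_div_iff₀ (by positivity) (by positivity)]
    linarith [mul_le_mul_of_nonneg_right hrr' hc]
  rw [radialProfile_eq_rpow_mul_half hr, radialProfile_eq_rpow_mul_half hr']
  exact mul_le_mul (rpow_le_rpow hr.le hrr' (sub_nonneg.2 hp)) hhalf
    (radialProfile_pos hc hs hr).le (by positivity)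

lemma radialProfile_lt_radialProfile (hc : 0 ≤ c) (hr : 0 < r) (hs : 0 < s) (hst : s < t) :
    radialProfile p c t r < radialProfile p c s r := by
  unfold radialProfile
  gcongr

lemma mul_radialProfile_le_mul_radialProfile (hc : 0 ≤ c) (hr : 0 < r) (hs : 0 < s) (hst : s ≤ t) :
    s * radialProfile p c s r ≤ t * radialProfile p c t r := by
  have ht : 0 < t := hs.trans_le hst
  have hsq : s ^ 2 * c ≤ t ^ 2 * c := by gcongr
  have hmul : s * √(t ^ 2 * r + c) ≤ t * √(s ^ 2 * r + c) := by
    rw [← sqrt_sq hs.le, ← sqrt_sq ht.le, ← sqrt_mul (sq_nonneg s), ← sqrt_mul (sq_nonneg t),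
      sqrt_sq hs.le, sqrt_sq ht.le]
    exact sqrt_le_sqrt (by linarith)
  unfold radialProfile
  rw [← mul_div_assoc, ← mul_div_assoc, div_le_div_iff₀ (by positivity) (by positivity)]
  linarith [mul_le_mul_of_nonneg_left hmul (rpow_nonneg hr.le p)]

lemma continuousAt_radialProfile_param (hc : 0 ≤ c) (hs : 0 < s) (hr : 0 < r) :
    ContinuousAt (fun s ↦ radialProfile p c s r) s := by
  unfold radialProfile
  exact continuousAt_const.div (by fun_prop) (by positivity)

end radialProfile

/-- The integrals in `F`, up to a factor independent of `p`; see `radialProfile` for the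
parameters. -/
noncomputable def radialMoment (p c s : ℝ) : ℝ :=
  ∫ r in (0 : ℝ)..1, (√(1 - r))⁻¹ * radialProfile p c s r

section radialMoment

variable {p c s t : ℝ}

lemma norm_inv_sqrt_mul_radialProfile_le (hp : 1 / 2 ≤ p) (hc : 0 ≤ c) (ht : 0 < t) (hts : t ≤ s)
    {r : ℝ} (hr : r ∈ Set.uIoc 0 1) :
    ‖(√(1 - r))⁻¹ * radialProfile p c s r‖ ≤ (√(1 - r))⁻¹ * t⁻¹ := by
  rw [Set.uIoc_of_le zero_le_one] at hr
  have hs : 0 < s := ht.trans_le hts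
  rw [norm_of_nonneg (mul_nonneg (by positivity) (radialProfile_pos hc hs hr.1).le)]
  gcongr
  exact (radialProfile_le_inv hp hc hs hr).trans (inv_anti₀ ht hts)

lemma intervalIntegrable_inv_sqrt_mul_radialProfile (hp : 1 / 2 ≤ p) (hc : 0 ≤ c) (hs : 0 < s) :
    IntervalIntegrable (fun r ↦ (√(1 - r))⁻¹ * radialProfile p c s r) volume 0 1 :=
  ((intervalIntegrable_inv_sqrt_sub zero_le_one).mul_const s⁻¹).mono_fun'
    (Measurable.aestronglyMeasurable (by fun_prop))
    (ae_restrict_of_forall_mem measurableSet_uIoc fun _ hr ↦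
      norm_inv_sqrt_mul_radialProfile_le hp hc hs le_rfl hr)

lemma radialMoment_pos (hp : 1 / 2 ≤ p) (hc : 0 ≤ c) (hs : 0 < s) : 0 < radialMoment p c s := by
  refine intervalIntegral_pos_of_pos_on (intervalIntegrable_inv_sqrt_mul_radialProfile hp hc hs)
    (fun r hr ↦ ?_) one_pos
  exact mul_pos (inv_pos.2 (sqrt_pos.2 (sub_pos.2 hr.2))) (radialProfile_pos hc hs hr.1)

lemma radialMoment_strictAntiOn (hp : 1 / 2 ≤ p) (hc : 0 ≤ c) :
    StrictAntiOn (radialMoment p c) (Set.Ioi 0) := by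
  intro s (hs : 0 < s) t (ht : 0 < t) hst
  have hsi := intervalIntegrable_inv_sqrt_mul_radialProfile hp hc hs
  have hti := intervalIntegrable_inv_sqrt_mul_radialProfile hp hc ht
  rw [← sub_pos, radialMoment, radialMoment, ← integral_sub hsi hti]
  refine intervalIntegral_pos_of_pos_on (hsi.sub hti) (fun r hr ↦ ?_) one_pos
  rw [← mul_sub]
  exact mul_pos (inv_pos.2 (sqrt_pos.2 (sub_pos.2 hr.2)))
    (sub_pos.2 (radialProfile_lt_radialProfile hc hr.1 hs hst))

lemma mul_radialMoment_monotoneOn (hp : 1 / 2 ≤ p) (hc : 0 ≤ c) :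
    MonotoneOn (fun s ↦ s * radialMoment p c s) (Set.Ioi 0) := by
  intro s (hs : 0 < s) t (ht : 0 < t) hst
  simp only [radialMoment, ← integral_const_mul]
  refine integral_mono_on_of_le_Ioo zero_le_one
    ((intervalIntegrable_inv_sqrt_mul_radialProfile hp hc hs).const_mul s)
    ((intervalIntegrable_inv_sqrt_mul_radialProfile hp hc ht).const_mul t) fun r hr ↦ ?_
  rw [mul_left_comm s, mul_left_comm t]
  exact mul_le_mul_of_nonneg_left (mul_radialProfile_le_mul_radialProfile hc hr.1 hs hst)
    (by positivity)

lemma continuousOn_radialMoment (hp : 1 / 2 ≤ p) (hc : 0 ≤ c) :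
    ContinuousOn (radialMoment p c) (Set.Ioi 0) := by
  intro s (hs : 0 < s)
  refine (continuousAt_of_dominated_interval
    (bound := fun r ↦ (√(1 - r))⁻¹ * (s / 2)⁻¹) ?_ ?_ ?_ ?_).continuousWithinAt
  · exact .of_forall fun t ↦ Measurable.aestronglyMeasurable (by fun_prop)
  · filter_upwards [Ici_mem_nhds (half_lt_self hs)] with t ht
    exact .of_forall fun r hr ↦ norm_inv_sqrt_mul_radialProfile_le hp hc (half_pos hs) ht hr
  · exact (intervalIntegrable_inv_sqrt_sub zero_le_one).mul_const _
  · refine .of_forall fun r hr ↦ ?_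
    rw [Set.uIoc_of_le zero_le_one] at hr
    exact continuousAt_const.mul (continuousAt_radialProfile_param hc hs hr.1)

lemma radialMoment_add_one :
    radialMoment (p + 1) c s =
      ∫ r in (0 : ℝ)..1, r * ((√(1 - r))⁻¹ * radialProfile p c s r) := by
  refine integral_congr_ae (.of_forall fun r hr ↦ ?_)
  rw [Set.uIoc_of_le zero_le_one] at hr
  rw [radialProfile_add_one hr.1, mul_left_comm]

lemma radialMoment_add_one_le (hp : 1 / 2 ≤ p) (hc : 0 ≤ c) (hs : 0 < s) :
    radialMoment (p + 1) c s ≤ radialMoment p c s := by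
  have hi := intervalIntegrable_inv_sqrt_mul_radialProfile hp hc hs
  rw [radialMoment_add_one, radialMoment]
  refine integral_mono_on_of_le_Ioo zero_le_one (hi.continuousOn_mul (by fun_prop)) hi
    fun r hr ↦ ?_
  exact mul_le_of_le_one_left
    (mul_nonneg (by positivity) (radialProfile_pos hc hs hr.1).le) hr.2.le

lemma two_thirds_mul_radialMoment_le (hp : 1 / 2 ≤ p) (hc : 0 ≤ c) (hs : 0 < s) :
    2 / 3 * radialMoment p c s ≤ radialMoment (p + 1) c s := by
  have hi := intervalIntegrable_inv_sqrt_mul_radialProfile hp hc hs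
  have hcheb : 0 ≤ ∫ r in (0 : ℝ)..1, (r - 2 / 3) * ((√(1 - r))⁻¹ * radialProfile p c s r) := by
    have h := mul_integral_sub_mul_le_of_monotoneOn (m := 2 / 3) (w := fun r ↦ (√(1 - r))⁻¹)
      (by norm_num) (fun r _ ↦ by positivity)
      ((radialProfile_monotoneOn hp hc hs).mono fun r hr ↦ hr.1)
      ((intervalIntegrable_inv_sqrt_sub zero_le_one).continuousOn_mul (by fun_prop))
      (hi.continuousOn_mul (by fun_prop))
    rwa [integral_sub_two_thirds_mul_inv_sqrt_one_sub, mul_zero] at h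
  simp only [sub_mul] at hcheb
  rw [integral_sub (hi.continuousOn_mul (by fun_prop)) (hi.const_mul _), integral_const_mul,
    ← radialMoment_add_one] at hcheb
  exact sub_nonneg.1 hcheb

end radialMoment

/-- The function `F` in terms of `s = σ⁺` and `c = 4(γ+1)²`: `s` times the mean of `r` for the
weight `√r / √((1-r)(s²r+c))` on `[0, 1]`. -/
noncomputable def scaledMean (c s : ℝ) : ℝ :=
  s * radialMoment (1 / 2 + 1) c s / radialMoment (1 / 2) c s

section scaledMean

variable {c s : ℝ}

lemma scaledMean_strictMonoOn (hc : 0 ≤ c) : StrictMonoOn (scaledMean c) (Set.Ioi 0) := by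
  intro s (hs : 0 < s) t (ht : 0 < t) hst
  exact div_lt_div₀' (mul_radialMoment_monotoneOn (by norm_num) hc hs ht hst.le)
    (radialMoment_strictAntiOn le_rfl hc hs ht hst)
    (mul_pos ht (radialMoment_pos (by norm_num) hc ht)) (radialMoment_pos le_rfl hc ht)

lemma continuousOn_scaledMean (hc : 0 ≤ c) : ContinuousOn (scaledMean c) (Set.Ioi 0) :=
  (continuousOn_id.mul (continuousOn_radialMoment (by norm_num) hc)).div
    (continuousOn_radialMoment le_rfl hc) fun _ hs ↦ (radialMoment_pos le_rfl hc hs).ne'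

lemma scaledMean_le (hc : 0 ≤ c) (hs : 0 < s) : scaledMean c s ≤ s := by
  rw [scaledMean, div_le_iff₀ (radialMoment_pos le_rfl hc hs)]
  gcongr
  exact radialMoment_add_one_le le_rfl hc hs

lemma two_thirds_mul_le_scaledMean (hc : 0 ≤ c) (hs : 0 < s) : 2 / 3 * s ≤ scaledMean c s := by
  rw [scaledMean, le_div_iff₀ (radialMoment_pos le_rfl hc hs), mul_comm (2 / 3), mul_assoc]
  gcongr
  exact two_thirds_mul_radialMoment_le le_rfl hc hs

lemma exists_scaledMean_eq (hc : 0 ≤ c) {y : ℝ} (hy : 0 < y) :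
    ∃ s ∈ Set.Icc y (3 / 2 * y), scaledMean c s = y := by
  refine intermediate_value_Icc (by linarith)
    ((continuousOn_scaledMean hc).mono fun s hs ↦ hy.trans_le hs.1) ⟨scaledMean_le hc hy, ?_⟩
  calc y = 2 / 3 * (3 / 2 * y) := by ring
    _ ≤ scaledMean c (3 / 2 * y) := two_thirds_mul_le_scaledMean hc (by positivity)

end scaledMean

section sigma

variable {γ x s : ℝ}

lemma sigmaPlus_nonneg : 0 ≤ sigmaPlus γ x := by
  have habs : |2 - γ ^ 2 * x| ≤ √((2 - γ ^ 2 * x) ^ 2 + 4 * (γ + 1) ^ 2) :=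
    abs_le_sqrt (le_add_of_nonneg_right (by positivity))
  unfold sigmaPlus
  linarith [neg_abs_le (2 - γ ^ 2 * x)]

lemma sigmaPlus_mul_sigmaMinus : sigmaPlus γ x * sigmaMinus γ x = -(4 * (γ + 1) ^ 2) := by
  have hsq := sq_sqrt (show 0 ≤ (2 - γ ^ 2 * x) ^ 2 + 4 * (γ + 1) ^ 2 by positivity)
  unfold sigmaPlus sigmaMinus
  linear_combination -hsq

lemma sigmaPlus_eq_iff_sq_eq (hs : 0 < s) :
    sigmaPlus γ x = s ↔ s ^ 2 = 2 * (2 - γ ^ 2 * x) * s + 4 * (γ + 1) ^ 2 := by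
  have hD : 0 ≤ (2 - γ ^ 2 * x) ^ 2 + 4 * (γ + 1) ^ 2 := by positivity
  rw [sigmaPlus, ← eq_sub_iff_add_eq']
  constructor
  · intro h
    have hsq := sq_sqrt hD
    rw [h] at hsq
    linarith
  · intro h
    have hle : 2 * (2 - γ ^ 2 * x) ≤ s := by
      refine le_of_mul_le_mul_right ?_ hs
      linarith [mul_nonneg zero_le_four (sq_nonneg (γ + 1))]
    rw [sqrt_eq_iff_mul_self_eq hD (by linarith)]
    linarith

lemma sigmaPlus_eq_iff (hγ : γ ≠ 0) (hs : 0 < s) :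
    sigmaPlus γ x = s ↔ x = (s * (4 - s) + 4 * (γ + 1) ^ 2) / (2 * γ ^ 2 * s) := by
  rw [sigmaPlus_eq_iff_sq_eq hs, eq_div_iff (by positivity)]
  constructor <;> intro h <;> linarith

end sigma

lemma integral_rpow_div_sqrt_eq_sqrt_mul_radialMoment {γ x : ℝ} (p : ℝ) (hσ : 0 < sigmaPlus γ x) :
    ∫ r in (0 : ℝ)..1, r ^ p / √((1 - r) * (sigmaPlus γ x * r - sigmaMinus γ x)) =
      √(sigmaPlus γ x) * radialMoment p (4 * (γ + 1) ^ 2) (sigmaPlus γ x) := by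
  rw [radialMoment, ← integral_const_mul]
  refine integral_congr fun r hr ↦ ?_
  rw [Set.uIcc_of_le zero_le_one] at hr
  have hr0 : 0 ≤ r := hr.1
  have hr1 : 0 ≤ 1 - r := sub_nonneg.2 hr.2
  have hfactor : sigmaPlus γ x * r - sigmaMinus γ x =
      (sigmaPlus γ x ^ 2 * r + 4 * (γ + 1) ^ 2) / sigmaPlus γ x := by
    rw [eq_div_iff hσ.ne']
    linear_combination -sigmaPlus_mul_sigmaMinus (γ := γ) (x := x)
  simp only [radialProfile]
  rw [hfactor, sqrt_mul hr1, sqrt_div (by positivity)]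
  simp only [div_eq_mul_inv, mul_inv, inv_inv]
  ring

lemma F_eq_scaledMean (γ x : ℝ) : F γ x = scaledMean (4 * (γ + 1) ^ 2) (sigmaPlus γ x) := by
  rcases (sigmaPlus_nonneg (γ := γ) (x := x)).eq_or_lt with hσ | hσ
  · simp only [F, scaledMean, ← hσ, zero_mul, zero_div]
  · have hp : (3 : ℝ) / 2 = 1 / 2 + 1 := by norm_num
    rw [F, hp, integral_rpow_div_sqrt_eq_sqrt_mul_radialMoment _ hσ,
      integral_rpow_div_sqrt_eq_sqrt_mul_radialMoment _ hσ, mul_left_comm,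
      mul_div_mul_left _ _ (sqrt_pos.2 hσ).ne', scaledMean]

theorem statement_0_general {γ : ℝ} (hγ : γ ≠ 0) : ∃! x : ℝ, 0 < x ∧ F γ x = 2 := by
  have hc : 0 ≤ 4 * (γ + 1) ^ 2 := by positivity
  obtain ⟨s, ⟨hs2, hs3⟩, hmean⟩ := exists_scaledMean_eq hc two_pos
  have hs : 0 < s := two_pos.trans_le hs2
  have hF (x : ℝ) : F γ x = 2 ↔ sigmaPlus γ x = s := by
    rw [F_eq_scaledMean]
    refine ⟨fun h ↦ ?_, fun h ↦ h ▸ hmean⟩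
    have hσ : sigmaPlus γ x ≠ 0 := fun h0 ↦ by simp [scaledMean, h0] at h
    exact (scaledMean_strictMonoOn hc).injOn (sigmaPlus_nonneg.lt_of_ne' hσ) hs
      (h.trans hmean.symm)
  simp only [hF, sigmaPlus_eq_iff hγ hs]
  refine ⟨_, ⟨?_, rfl⟩, fun x hx ↦ hx.2⟩
  have hs4 : 0 < 4 - s := by linarith
  positivity

/-- For every `μ > 1`, with `γ = (1+√μ)/(μ−1)`, there is a unique `x > 0` with
`F(γ,x) = 2`; i.e. the moduli space `M(μ)` consists of exactly one point. -/
theorem statement_0 (μ : ℝ) (hμ : 1 < μ) :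
    ∃! x : ℝ, 0 < x ∧ F ((1 + Real.sqrt μ) / (μ - 1)) x = 2 := by
  exact statement_0_general (div_pos (by positivity) (sub_pos.2 hμ)).ne'
end

section
/- Let μ > 1, set γ = (1+√μ)/(μ−1), and let x > 0 be the unique solution of F(γ, x) = 2. Then σ⁺(γ,x)/2 ≥ γ + 1 (i.e., the maximal excursion q₁^max = σ⁺(γ,x)·x/2 of the inner electron reaches at least the position q̄₂ = (γ+1)x of the frozen outer electron, so the two orbits intersect) if and only if μ ≥ (3π/(3π − ϖ²))², where ϖ = 2∫₀¹ dt/√(1−t⁴) is the lemniscatic constant. -/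
open Real intervalIntegral

/-!
Write `a = σ⁺`, `b = -σ⁻`, so that `a * b = (2 * (γ + 1)) ^ 2` and the orbits intersect iff `b ≤ a`.
By homogeneity of the integrals `F = √(a * b) * Φ (a / b)`, where `Φ` is strictly increasing:
raising `s` raises its numerator `∫ r ^ (3 / 2) / √((1 - r) * (r + 1 / s))` and lowers its
denominator `∫ r ^ (1 / 2) / √((1 - r) * (s * r + 1))`. Hence the orbits intersect iff
`2 * (γ + 1) * Φ 1 ≤ F`. At `s = 1` the weight is `√(1 - r ^ 2)` and the Beta function gives
`Φ 1 = ϖ ^ 2 / (3 * π)`.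
-/

open MeasureTheory Set

section Beta

open ProbabilityTheory

variable {α β : ℝ}

lemma ofReal_rpow_mul_one_sub_rpow {x : ℝ} (hx : x ∈ Icc (0 : ℝ) 1) :
    ((x ^ (α - 1) * (1 - x) ^ (β - 1) : ℝ) : ℂ) =
      (x : ℂ) ^ ((α : ℂ) - 1) * (1 - (x : ℂ)) ^ ((β : ℂ) - 1) := by
  rw [Complex.ofReal_mul, Complex.ofReal_cpow hx.1, Complex.ofReal_cpow (sub_nonneg.2 hx.2)]
  push_cast
  rfl

lemma intervalIntegrable_rpow_mul_one_sub_rpow (hα : 0 < α) (hβ : 0 < β) :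
    IntervalIntegrable (fun x : ℝ ↦ x ^ (α - 1) * (1 - x) ^ (β - 1)) volume 0 1 := by
  have hℂ := Complex.betaIntegral_convergent (u := α) (v := β) (by simpa) (by simpa)
  have hre : IntervalIntegrable (fun x : ℝ ↦
      ((x : ℂ) ^ ((α : ℂ) - 1) * (1 - (x : ℂ)) ^ ((β : ℂ) - 1)).re) volume 0 1 :=
    ⟨hℂ.1.re, hℂ.2.re⟩
  refine hre.congr_uIoo fun x hx ↦ ?_
  rw [uIoo_of_le zero_le_one] at hx
  simp only [← ofReal_rpow_mul_one_sub_rpow (Ioo_subset_Icc_self hx), Complex.ofReal_re]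

lemma integral_rpow_mul_one_sub_rpow (hα : 0 < α) (hβ : 0 < β) :
    ∫ x in (0 : ℝ)..1, x ^ (α - 1) * (1 - x) ^ (β - 1) = beta α β := by
  rw [beta_eq_betaIntegralReal α β hα hβ, Complex.betaIntegral,
    ← Complex.ofReal_re (∫ x in (0 : ℝ)..1, _), ← intervalIntegral.integral_ofReal]
  congr 1
  refine integral_congr_Ioo_of_le zero_le_one fun x hx ↦ ?_
  exact ofReal_rpow_mul_one_sub_rpow (Ioo_subset_Icc_self hx)

lemma rpow_one_half_sub_one {x : ℝ} (hx : 0 ≤ x) : x ^ ((1 / 2 : ℝ) - 1) = (√x)⁻¹ := by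
  rw [sqrt_eq_rpow, ← rpow_neg hx]
  norm_num

lemma integral_rpow_div_sqrt_one_sub_rpow {p n : ℝ} (hp : -1 < p) (hn : 0 < n) :
    ∫ t in (0 : ℝ)..1, t ^ p / √(1 - t ^ n) = beta ((p + 1) / n) (1 / 2) / n := by
  have hpos (t : ℝ) (ht : t ∈ Ioo (min (0 : ℝ) 1) (max 0 1)) : 0 < t :=
    (le_min le_rfl zero_le_one).trans_lt ht.1
  have hsubst := integral_comp_mul_deriv_of_deriv_nonneg (a := 0) (b := 1)
    (f := fun t : ℝ ↦ t ^ n) (f' := fun t ↦ n * t ^ (n - 1))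
    (g := fun u : ℝ ↦ u ^ ((p + 1) / n - 1) * (1 - u) ^ ((1 / 2 : ℝ) - 1))
    (continuous_rpow_const hn.le).continuousOn
    (fun t ht ↦ hasDerivAt_rpow_const (Or.inl (hpos t ht).ne'))
    (fun t ht ↦ mul_nonneg hn.le (rpow_nonneg (hpos t ht).le _))
  rw [zero_rpow hn.ne', one_rpow,
    integral_rpow_mul_one_sub_rpow (div_pos (by linarith) hn) one_half_pos] at hsubst
  rw [← hsubst, ← intervalIntegral.integral_div]
  refine integral_congr_Ioo_of_le zero_le_one fun t ht ↦ ?_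
  have hpow : (t ^ n) ^ ((p + 1) / n - 1) * t ^ (n - 1) = t ^ p := by
    rw [← rpow_mul ht.1.le, ← rpow_add ht.1]
    congr 1
    field_simp
    ring
  have htn : 0 ≤ 1 - t ^ n := sub_nonneg.2 (rpow_le_one ht.1.le ht.2.le hn.le)
  simp only [Function.comp_apply, rpow_one_half_sub_one htn, ← hpow]
  field_simp

lemma beta_add_one_left (hα : α ≠ 0) (hαβ : α + β ≠ 0) :
    beta (α + 1) β = α / (α + β) * beta α β := by
  rw [beta, beta, Gamma_add_one hα, add_right_comm, Gamma_add_one hαβ, mul_assoc, mul_div_mul_comm]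

lemma beta_one_half_mul_beta_add_one_half (hα : 0 < α) :
    beta α (1 / 2) * beta (α + 1 / 2) (1 / 2) = π / α := by
  have hα1 : α + 1 / 2 + 1 / 2 = α + 1 := by ring
  rw [beta, beta, hα1, Gamma_add_one hα.ne', Gamma_one_half_eq]
  field_simp
  exact sq_sqrt pi_pos.le

lemma varpi_eq_beta : varpi = beta (1 / 4) (1 / 2) / 2 := by
  have h := integral_rpow_div_sqrt_one_sub_rpow (p := 0) (n := 4) (by norm_num) (by norm_num)
  simp only [rpow_zero, rpow_ofNat, zero_add] at h
  rw [varpi, h]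
  ring

end Beta

lemma integral_lt_integral_of_forall_mem_Ioo_lt {f g : ℝ → ℝ} {a b : ℝ} (hab : a < b)
    (hf : IntervalIntegrable f volume a b) (hg : IntervalIntegrable g volume a b)
    (hfg : ∀ x ∈ Ioo a b, f x < g x) : ∫ x in a..b, f x < ∫ x in a..b, g x := by
  rw [← sub_pos, ← integral_sub hg hf]
  exact intervalIntegral_pos_of_pos_on (hg.sub hf) (fun x hx ↦ sub_pos.2 (hfg x hx)) hab

/-- The integral `∫₀¹ rᵖ / √((1 - r)(a r + b)) dr`. Both integrals in `F` are of this form, with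
`a = σ⁺` and `b = -σ⁻`. -/
noncomputable def radialIntegral (p a b : ℝ) : ℝ :=
  ∫ r in (0 : ℝ)..1, r ^ p / √((1 - r) * (a * r + b))

section RadialIntegral

variable {p a b : ℝ}

lemma intervalIntegrable_rpow_div_sqrt (hp : -1 < p) (ha : 0 ≤ a) (hb : 0 < b) :
    IntervalIntegrable (fun r : ℝ ↦ r ^ p / √((1 - r) * (a * r + b))) volume 0 1 := by
  have hcont : ContinuousOn (fun r : ℝ ↦ (√(a * r + b))⁻¹) (uIcc 0 1) := by
    refine ContinuousOn.inv₀ (by fun_prop) fun r hr ↦ ?_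
    rw [uIcc_of_le zero_le_one] at hr
    have := mul_nonneg ha hr.1
    positivity
  have hbeta := intervalIntegrable_rpow_mul_one_sub_rpow (neg_lt_iff_pos_add.1 hp) one_half_pos
  refine (hbeta.mul_continuousOn hcont).congr_uIoo fun r hr ↦ ?_
  rw [uIoo_of_le zero_le_one] at hr
  have h1r : 0 ≤ 1 - r := sub_nonneg.2 hr.2.le
  simp only [add_sub_cancel_right, rpow_one_half_sub_one h1r, sqrt_mul h1r]
  rw [div_eq_mul_inv, mul_inv, mul_assoc]

lemma radialIntegral_pos (hp : -1 < p) (ha : 0 ≤ a) (hb : 0 < b) : 0 < radialIntegral p a b := by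
  refine intervalIntegral_pos_of_pos_on (intervalIntegrable_rpow_div_sqrt hp ha hb)
    (fun r ⟨hr0, hr1⟩ ↦ ?_) one_pos
  have := sub_pos.2 hr1
  positivity

lemma strictAntiOn_radialIntegral_exponent (ha : 0 ≤ a) (hb : 0 < b) :
    StrictAntiOn (fun p ↦ radialIntegral p a b) (Ioi (-1)) := by
  intro p hp q hq hpq
  refine integral_lt_integral_of_forall_mem_Ioo_lt one_pos
    (intervalIntegrable_rpow_div_sqrt hq ha hb) (intervalIntegrable_rpow_div_sqrt hp ha hb)
    fun r ⟨hr0, hr1⟩ ↦ ?_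
  have := sub_pos.2 hr1
  exact div_lt_div_of_pos_right (rpow_lt_rpow_of_exponent_gt hr0 hr1 hpq) (by positivity)

lemma strictAntiOn_radialIntegral_left (hp : -1 < p) (hb : 0 < b) :
    StrictAntiOn (fun a ↦ radialIntegral p a b) (Ici 0) := by
  intro a (ha : 0 ≤ a) a' ha' haa'
  refine integral_lt_integral_of_forall_mem_Ioo_lt one_pos
    (intervalIntegrable_rpow_div_sqrt hp ha' hb) (intervalIntegrable_rpow_div_sqrt hp ha hb)
    fun r ⟨hr0, hr1⟩ ↦ ?_
  have := sub_pos.2 hr1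
  gcongr

lemma strictAntiOn_radialIntegral_right (hp : -1 < p) (ha : 0 ≤ a) :
    StrictAntiOn (fun b ↦ radialIntegral p a b) (Ioi 0) := by
  intro b (hb : 0 < b) b' hb' hbb'
  refine integral_lt_integral_of_forall_mem_Ioo_lt one_pos
    (intervalIntegrable_rpow_div_sqrt hp ha hb') (intervalIntegrable_rpow_div_sqrt hp ha hb)
    fun r ⟨hr0, hr1⟩ ↦ ?_
  have := sub_pos.2 hr1
  gcongr

lemma radialIntegral_smul {c : ℝ} (hc : 0 ≤ c) (p a b : ℝ) :
    radialIntegral p (c * a) (c * b) = radialIntegral p a b / √c := by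
  rw [radialIntegral, radialIntegral, ← intervalIntegral.integral_div]
  refine intervalIntegral.integral_congr fun r _ ↦ ?_
  have hfactor : (1 - r) * (c * a * r + c * b) = c * ((1 - r) * (a * r + b)) := by ring
  simp only [hfactor, sqrt_mul hc]
  rw [div_div, mul_comm]

open ProbabilityTheory in
lemma radialIntegral_one_one (hp : -1 < p) :
    radialIntegral p 1 1 = beta ((p + 1) / 2) (1 / 2) / 2 := by
  rw [← integral_rpow_div_sqrt_one_sub_rpow hp two_pos, radialIntegral]
  refine intervalIntegral.integral_congr fun r _ ↦ ?_
  have hsq : (1 - r) * (1 * r + 1) = 1 - r ^ 2 := by ring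
  simp only [hsq, rpow_ofNat]

end RadialIntegral

/-- The function `Φ` with `F(γ,x) = √(-σ⁺σ⁻) · Φ(-σ⁺/σ⁻)`. It is `F` made scale invariant; numerator
and denominator are normalized differently so that each is visibly monotone in `s`. -/
noncomputable def normalizedMean (s : ℝ) : ℝ :=
  radialIntegral (3 / 2) 1 s⁻¹ / radialIntegral (1 / 2) s 1

lemma mul_radialIntegral_div_radialIntegral {a b : ℝ} (ha : 0 < a) (hb : 0 < b) :
    a * radialIntegral (3 / 2) a b / radialIntegral (1 / 2) a b =
      √(a * b) * normalizedMean (a / b) := by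
  have hnum := radialIntegral_smul ha.le (3 / 2) 1 (b / a)
  have hden := radialIntegral_smul hb.le (1 / 2) (a / b) 1
  rw [mul_one, mul_div_cancel₀ _ ha.ne'] at hnum
  rw [mul_one, mul_div_cancel₀ _ hb.ne'] at hden
  rw [normalizedMean, inv_div, hnum, hden, sqrt_mul ha.le]
  nth_rw 1 [← mul_self_sqrt ha.le]
  field_simp

lemma strictMonoOn_normalizedMean : StrictMonoOn normalizedMean (Ioi 0) := by
  intro s (hs : 0 < s) t (ht : 0 < t) hst
  have hnum : radialIntegral (3 / 2) 1 s⁻¹ < radialIntegral (3 / 2) 1 t⁻¹ :=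
    strictAntiOn_radialIntegral_right (by norm_num) zero_le_one (inv_pos.2 ht) (inv_pos.2 hs)
      (inv_strictAnti₀ hs hst)
  have hden : radialIntegral (1 / 2) t 1 < radialIntegral (1 / 2) s 1 :=
    strictAntiOn_radialIntegral_left (by norm_num) one_pos hs.le ht.le hst
  exact div_lt_div₀ hnum hden.le
    (radialIntegral_pos (by norm_num) zero_le_one (inv_pos.2 ht)).le
    (radialIntegral_pos (by norm_num) ht.le one_pos)

lemma normalizedMean_one_lt_one : normalizedMean 1 < 1 := by
  rw [normalizedMean, inv_one,
    div_lt_one (radialIntegral_pos (by norm_num) zero_le_one one_pos)]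
  exact strictAntiOn_radialIntegral_exponent zero_le_one one_pos
    (by norm_num : (-1 : ℝ) < 1 / 2) (by norm_num : (-1 : ℝ) < 3 / 2) (by norm_num)

open ProbabilityTheory in
lemma normalizedMean_one : normalizedMean 1 = varpi ^ 2 / (3 * π) := by
  have hnum : radialIntegral (3 / 2) 1 1 = beta (1 / 4) (1 / 2) / 6 := by
    have h := beta_add_one_left (α := 1 / 4) (β := 1 / 2) (by norm_num) (by norm_num)
    rw [radialIntegral_one_one (by norm_num)]
    norm_num at h ⊢
    linarith
  have hden : radialIntegral (1 / 2) 1 1 = beta (3 / 4) (1 / 2) / 2 := by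
    rw [radialIntegral_one_one (by norm_num)]
    norm_num
  have hprod : beta (1 / 4) (1 / 2) * beta (3 / 4) (1 / 2) = 4 * π := by
    have h := beta_one_half_mul_beta_add_one_half (α := 1 / 4) (by norm_num)
    norm_num at h ⊢
    linarith
  have hpos : 0 < beta (3 / 4) (1 / 2) := beta_pos (by norm_num) (by norm_num)
  rw [normalizedMean, inv_one, hnum, hden, varpi_eq_beta]
  field_simp
  linear_combination -6 * beta (1 / 4) (1 / 2) * hprod

section Sigma

variable {γ : ℝ} (x : ℝ)

lemma abs_two_sub_lt_sqrt (hγ : γ ≠ -1) :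
    |2 - γ ^ 2 * x| < √((2 - γ ^ 2 * x) ^ 2 + 4 * (γ + 1) ^ 2) := by
  have : γ + 1 ≠ 0 := mt eq_neg_of_add_eq_zero_left hγ
  rw [← sqrt_sq_eq_abs]
  exact sqrt_lt_sqrt (sq_nonneg _) (lt_add_of_pos_right _ (by positivity))

lemma sigmaPlus_pos (hγ : γ ≠ -1) : 0 < sigmaPlus γ x := by
  have := (abs_lt.1 (abs_two_sub_lt_sqrt x hγ)).1
  rw [sigmaPlus]
  linarith

lemma sigmaMinus_neg (hγ : γ ≠ -1) : sigmaMinus γ x < 0 :=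
  sub_neg.2 (abs_lt.1 (abs_two_sub_lt_sqrt x hγ)).2

lemma sigmaPlus_mul_neg_sigmaMinus (γ x : ℝ) :
    sigmaPlus γ x * -sigmaMinus γ x = (2 * (γ + 1)) ^ 2 := by
  have hsq := sq_sqrt (show 0 ≤ (2 - γ ^ 2 * x) ^ 2 + 4 * (γ + 1) ^ 2 by positivity)
  rw [sigmaPlus, sigmaMinus]
  linear_combination hsq

lemma F_eq_mul_normalizedMean (hγ : -1 < γ) :
    F γ x = 2 * (γ + 1) * normalizedMean (sigmaPlus γ x / -sigmaMinus γ x) := by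
  have hsqrt : √(sigmaPlus γ x * -sigmaMinus γ x) = 2 * (γ + 1) := by
    rw [sigmaPlus_mul_neg_sigmaMinus, sqrt_sq (by linarith)]
  rw [← hsqrt, ← mul_radialIntegral_div_radialIntegral (sigmaPlus_pos x hγ.ne')
    (neg_pos.2 (sigmaMinus_neg x hγ.ne'))]
  simp only [F, radialIntegral, sub_eq_add_neg]

lemma add_one_le_half_sigmaPlus_iff_one_le_div (hγ : -1 < γ) :
    γ + 1 ≤ sigmaPlus γ x / 2 ↔ 1 ≤ sigmaPlus γ x / -sigmaMinus γ x := by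
  have hpos := sigmaPlus_pos x hγ.ne'
  calc γ + 1 ≤ sigmaPlus γ x / 2
      ↔ 2 * (γ + 1) ≤ sigmaPlus γ x := by rw [le_div_iff₀' two_pos]
    _ ↔ (2 * (γ + 1)) ^ 2 ≤ sigmaPlus γ x ^ 2 :=
      (pow_le_pow_iff_left₀ (by linarith) hpos.le two_ne_zero).symm
    _ ↔ -sigmaMinus γ x ≤ sigmaPlus γ x := by
      rw [← sigmaPlus_mul_neg_sigmaMinus, sq, mul_le_mul_iff_right₀ hpos]
    _ ↔ 1 ≤ sigmaPlus γ x / -sigmaMinus γ x :=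
      (one_le_div (neg_pos.2 (sigmaMinus_neg x hγ.ne'))).symm

theorem add_one_le_half_sigmaPlus_iff (hγ : -1 < γ) :
    γ + 1 ≤ sigmaPlus γ x / 2 ↔ 2 * (γ + 1) * normalizedMean 1 ≤ F γ x := by
  have hdiv : 0 < sigmaPlus γ x / -sigmaMinus γ x :=
    div_pos (sigmaPlus_pos x hγ.ne') (neg_pos.2 (sigmaMinus_neg x hγ.ne'))
  have hγ1 : 0 < 2 * (γ + 1) := by linarith
  rw [add_one_le_half_sigmaPlus_iff_one_le_div x hγ, F_eq_mul_normalizedMean x hγ,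
    mul_le_mul_iff_right₀ hγ1, strictMonoOn_normalizedMean.le_iff_le (mem_Ioi.2 one_pos) hdiv]

end Sigma

lemma one_add_sqrt_div_add_one {μ : ℝ} (hμ : 1 < μ) :
    (1 + √μ) / (μ - 1) + 1 = (1 - (√μ)⁻¹)⁻¹ := by
  have hsqrt : 0 < √μ - 1 := sub_pos.2 (by rwa [lt_sqrt zero_le_one, one_pow])
  have hfactor : μ - 1 = (√μ - 1) * (√μ + 1) := by
    linear_combination -sq_sqrt (zero_le_one.trans hμ.le)
  have : 0 < √μ := by linarith
  rw [hfactor]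
  field_simp
  ring

/-- For `μ > 1`, `γ = (1+√μ)/(μ−1)` and `x > 0` the unique solution of `F(γ,x)=2`,
the orbits intersect, i.e. `σ⁺(γ,x)/2 ≥ γ+1`, iff `μ ≥ (3π/(3π−ϖ²))²`. -/
theorem statement_1 (μ γ x : ℝ) (hμ : 1 < μ) (hγ : γ = (1 + Real.sqrt μ) / (μ - 1))
    (hx : 0 < x) (hFx : F γ x = 2) :
    sigmaPlus γ x / 2 ≥ γ + 1 ↔ μ ≥ (3 * π / (3 * π - varpi ^ 2)) ^ 2 := by
  have hsqrt : 1 < √μ := by rwa [lt_sqrt zero_le_one, one_pow]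
  have hγ1 : γ + 1 = (1 - (√μ)⁻¹)⁻¹ := hγ ▸ one_add_sqrt_div_add_one hμ
  have hinv : 0 < 1 - (√μ)⁻¹ := sub_pos.2 (inv_lt_one_of_one_lt₀ hsqrt)
  have hγ_gt : -1 < γ := neg_lt_iff_pos_add.2 (hγ1 ▸ inv_pos.2 hinv)
  have hΦ : 0 < 1 - normalizedMean 1 := sub_pos.2 normalizedMean_one_lt_one
  have hthreshold : 3 * π / (3 * π - varpi ^ 2) = (1 - normalizedMean 1)⁻¹ := by
    rw [normalizedMean_one, one_sub_div (by positivity), inv_div]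
  calc sigmaPlus γ x / 2 ≥ γ + 1
      ↔ 2 * (γ + 1) * normalizedMean 1 ≤ 2 := hFx ▸ add_one_le_half_sigmaPlus_iff x hγ_gt
    _ ↔ normalizedMean 1 ≤ 1 - (√μ)⁻¹ := by
      rw [mul_assoc, mul_le_iff_le_one_right two_pos, hγ1, inv_mul_le_one₀ hinv]
    _ ↔ (1 - normalizedMean 1)⁻¹ ≤ √μ := by
      rw [inv_le_comm₀ hΦ (by linarith), le_sub_comm]
    _ ↔ μ ≥ (3 * π / (3 * π - varpi ^ 2)) ^ 2 := by
      rw [hthreshold, ge_iff_le, le_sqrt' (inv_pos.2 hΦ)]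
end

section
/- Let μ > 0, η > 0 and let m ∈ ℝ. Suppose q₂ : ℝ → ℝ is a smooth 1-periodic function with q₂(t) > 0 for all t, whose mean q̄₂ = ∫₀¹ q₂(t) dt satisfies q̄₂ > m > 0, and which satisfies the second-order delay equation q₂''(t) = −μη²/q₂(t)² + η²/(q̄₂ − m)² for all t ∈ ℝ. Then q₂ is constant. -/
open Real intervalIntegral

/-!
At a maximum of `q₂` the second derivative is nonpositive, at a minimum it is nonnegative.
The mean enters the right-hand side of the equation only as a constant, so `q₂'' = g(q₂)` with `g`
strictly increasing on `(0, ∞)`; hence `g(max q₂) ≤ 0 ≤ g(min q₂)` forces `max q₂ ≤ min q₂`.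
-/

theorem deriv_deriv_nonpos_of_isLocalMax {f : ℝ → ℝ} {a : ℝ} (hmax : IsLocalMax f a)
    (hf : ContinuousAt f a) : deriv (deriv f) a ≤ 0 := by
  by_contra! hpos
  have hmin : IsLocalMin f a := isLocalMin_of_deriv_deriv_pos hpos hmax.deriv_eq_zero hf
  have hconst : f =ᶠ[nhds a] fun _ ↦ f a := (hmax.and hmin).mono fun _ h ↦ le_antisymm h.1 h.2
  have hzero : deriv (deriv f) a = 0 := by simp [hconst.deriv.deriv_eq]
  exact hpos.ne' hzero

theorem deriv_deriv_nonneg_of_isLocalMin {f : ℝ → ℝ} {a : ℝ} (hmin : IsLocalMin f a)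
    (hf : ContinuousAt f a) : 0 ≤ deriv (deriv f) a := by
  simpa [deriv.fun_neg'] using deriv_deriv_nonpos_of_isLocalMax hmin.neg hf.neg

theorem exists_forall_le_and_forall_ge_of_periodic {α : Type*} [LinearOrder α]
    [TopologicalSpace α] [OrderClosedTopology α] {f : ℝ → α} {c : ℝ}
    (hper : Function.Periodic f c) (hc : c ≠ 0) (hf : Continuous f) :
    ∃ a b, (∀ t, f t ≤ f a) ∧ ∀ t, f b ≤ f t := by
  have hcompact : IsCompact (Set.range f) := hper.compact_of_continuous hc hf
  obtain ⟨_, ⟨a, rfl⟩, ha⟩ := hcompact.exists_isGreatest (Set.range_nonempty f)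
  obtain ⟨_, ⟨b, rfl⟩, hb⟩ := hcompact.exists_isLeast (Set.range_nonempty f)
  exact ⟨a, b, Set.forall_mem_range.1 ha, Set.forall_mem_range.1 hb⟩

theorem strictMonoOn_neg_div_pow_add {K : Type*} [Field K] [LinearOrder K]
    [IsStrictOrderedRing K] {k : K} (hk : 0 < k) (C : K) {n : ℕ} (hn : n ≠ 0) :
    StrictMonoOn (fun x : K ↦ -k / x ^ n + C) (Set.Ioi 0) := by
  intro x (hx : 0 < x) y _ hxy
  have hpow : x ^ n < y ^ n := pow_lt_pow_left₀ hxy hx.le hn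
  have hdiv : k / y ^ n < k / x ^ n := div_lt_div_of_pos_left hk (pow_pos hx n) hpow
  simpa only [neg_div, add_lt_add_iff_right, neg_lt_neg_iff] using hdiv

theorem statement_2_general {f f' g : ℝ → ℝ} {c : ℝ} (hper : Function.Periodic f c) (hc : c ≠ 0)
    (hf : ∀ t, HasDerivAt f (f' t) t) (hf' : ∀ t, HasDerivAt f' (g (f t)) t)
    (hg : StrictMonoOn g (Set.range f)) (s t : ℝ) : f s = f t := by
  have hcont : Continuous f := continuous_iff_continuousAt.2 fun t ↦ (hf t).continuousAt
  have hderiv (t : ℝ) : deriv (deriv f) t = g (f t) := by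
    rw [deriv_eq hf, (hf' t).deriv]
  obtain ⟨a, b, ha, hb⟩ := exists_forall_le_and_forall_ge_of_periodic hper hc hcont
  have hga : g (f a) ≤ 0 :=
    hderiv a ▸ deriv_deriv_nonpos_of_isLocalMax (.of_forall ha) hcont.continuousAt
  have hgb : 0 ≤ g (f b) :=
    hderiv b ▸ deriv_deriv_nonneg_of_isLocalMin (.of_forall hb) hcont.continuousAt
  have hab : f a ≤ f b := (hg.le_iff_le ⟨a, rfl⟩ ⟨b, rfl⟩).1 (hga.trans hgb)
  have hfa (u : ℝ) : f u = f a := (ha u).antisymm (hab.trans (hb u))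
  rw [hfa s, hfa t]

/-- If a smooth positive `1`-periodic function `q₂` with mean `q̄₂ > m > 0` satisfies the
delay equation `q₂'' = −μη²/q₂² + η²/(q̄₂−m)²`, then `q₂` is constant. -/
theorem statement_2 (μ η m : ℝ) (hμ : 0 < μ) (hη : 0 < η) (hm : 0 < m)
    (q₂ : ℝ → ℝ) (hsmooth : ContDiff ℝ (⊤ : ℕ∞) q₂)
    (hper : ∀ t : ℝ, q₂ (t + 1) = q₂ t)
    (hpos : ∀ t : ℝ, 0 < q₂ t)
    (hmean : m < ∫ t in (0:ℝ)..1, q₂ t)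
    (hODE : ∀ t : ℝ, deriv (deriv q₂) t =
      -(μ * η ^ 2) / (q₂ t) ^ 2 + η ^ 2 / ((∫ s in (0:ℝ)..1, q₂ s) - m) ^ 2) :
    ∀ s t : ℝ, q₂ s = q₂ t := by
  have hC2 : ContDiff ℝ 2 q₂ := contDiff_infty.1 hsmooth 2
  exact statement_2_general hper one_ne_zero (fun t ↦ (hC2.differentiable two_ne_zero t).hasDerivAt)
    (fun t ↦ hODE t ▸ (hC2.differentiable_deriv_two t).hasDerivAt)
    ((strictMonoOn_neg_div_pow_add (by positivity) _ two_ne_zero).mono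
      (Set.range_subset_iff.2 hpos))
end

section
/- Let γ > 0, q̄₁ > 0 and κ ∈ ℝ. Define q₁^max = (γ²κq̄₁² + √(γ⁴κ²q̄₁⁴ + 4(γ+1)²q̄₁²))/2 and q̄₂ = (γ+1)q̄₁. Then: q₁^max = q̄₂ if and only if κ = 0; q₁^max > q̄₂ if and only if κ > 0; and q₁^max < q̄₂ if and only if κ < 0. (Physically: the orbits of the inner and outer electron touch, intersect, or are disjoint according to the sign of the energy constant κ.) -/
open Real intervalIntegral

/-!
The maximal position `x = q₁^max` is the positive root of `x² = a x + q̄₂²` with `a = γ²κq̄₁²`.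
Hence `(x - q̄₂)(x + q̄₂) = a x`, where `x` and `x + q̄₂` are positive, so `x - q̄₂` has the sign
of `a`, which is the sign of `κ`.
-/

theorem eq_gt_lt_iff_of_sign_sub_eq_sign {G α : Type*} [AddGroup G] [LinearOrder G]
    [AddRightMono G] [LinearOrder α] [Zero α] {x y : G} {c : α}
    (h : SignType.sign (x - y) = SignType.sign c) :
    (x = y ↔ c = 0) ∧ (x > y ↔ 0 < c) ∧ (x < y ↔ c < 0) := by
  refine ⟨?_, ?_, ?_⟩
  · rw [← sub_eq_zero, ← _root_.sign_eq_zero_iff, h, _root_.sign_eq_zero_iff]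
  · rw [gt_iff_lt, ← sub_pos, ← sign_eq_one_iff, h, sign_eq_one_iff]
  · rw [← sub_neg, ← sign_eq_neg_one_iff, h, sign_eq_neg_one_iff]

section LinearOrderedRing

variable {R : Type*} [CommRing R] [LinearOrder R] [IsStrictOrderedRing R]

theorem sign_mul_of_pos_right (x : R) {y : R} (hy : 0 < y) :
    SignType.sign (x * y) = SignType.sign x := by
  rw [sign_mul, sign_pos hy, mul_one]

theorem sign_sub_eq_sign_of_sq_eq {a b x : R} (hb : 0 ≤ b) (hx : 0 < x)
    (hroot : x ^ 2 = a * x + b ^ 2) : SignType.sign (x - b) = SignType.sign a :=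
  calc SignType.sign (x - b)
      = SignType.sign ((x - b) * (x + b)) :=
        (sign_mul_of_pos_right _ (add_pos_of_pos_of_nonneg hx hb)).symm
    _ = SignType.sign (a * x) := by congr 1; linear_combination hroot
    _ = SignType.sign a := sign_mul_of_pos_right a hx

end LinearOrderedRing

/-- The larger root of `x² = a x + b²`, which is positive when `b ≠ 0`. With `a = γ²κq̄₁²` and
`b = q̄₂` it is the maximal position `q₁^max` of the inner electron. -/
noncomputable def largerRoot (a b : ℝ) : ℝ := (a + √(a ^ 2 + 4 * b ^ 2)) / 2

theorem largerRoot_sq (a b : ℝ) : largerRoot a b ^ 2 = a * largerRoot a b + b ^ 2 := by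
  have hsqrt : √(a ^ 2 + 4 * b ^ 2) ^ 2 = a ^ 2 + 4 * b ^ 2 := sq_sqrt (by positivity)
  unfold largerRoot
  linear_combination hsqrt / 4

theorem largerRoot_pos (a : ℝ) {b : ℝ} (hb : b ≠ 0) : 0 < largerRoot a b := by
  have hsqrt : -√(a ^ 2 + 4 * b ^ 2) < a :=
    neg_sqrt_lt_of_sq_lt (lt_add_of_pos_right _ (by positivity))
  unfold largerRoot
  linarith

theorem sign_largerRoot_sub (a : ℝ) {b : ℝ} (hb : 0 < b) :
    SignType.sign (largerRoot a b - b) = SignType.sign a :=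
  sign_sub_eq_sign_of_sq_eq hb.le (largerRoot_pos a hb.ne') (largerRoot_sq a b)

theorem statement_7_general {γ qbar₁ κ : ℝ} (hγ : γ ≠ 0) (hq₂ : 0 < (γ + 1) * qbar₁) :
    SignType.sign ((γ ^ 2 * κ * qbar₁ ^ 2 +
        √(γ ^ 4 * κ ^ 2 * qbar₁ ^ 4 + 4 * (γ + 1) ^ 2 * qbar₁ ^ 2)) / 2 - (γ + 1) * qbar₁)
      = SignType.sign κ := by
  have hq₁ : qbar₁ ≠ 0 := right_ne_zero_of_mul hq₂.ne'
  have hmax : (γ ^ 2 * κ * qbar₁ ^ 2 +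
      √(γ ^ 4 * κ ^ 2 * qbar₁ ^ 4 + 4 * (γ + 1) ^ 2 * qbar₁ ^ 2)) / 2
      = largerRoot (κ * (γ ^ 2 * qbar₁ ^ 2)) ((γ + 1) * qbar₁) := by
    unfold largerRoot
    ring_nf
  rw [hmax, sign_largerRoot_sub _ hq₂, sign_mul_of_pos_right κ (by positivity)]

/-- With `q₁^max = (γ²κq̄₁² + √(γ⁴κ²q̄₁⁴ + 4(γ+1)²q̄₁²))/2` and `q̄₂ = (γ+1)q̄₁`, the
orbits touch, intersect, or are disjoint according to the sign of `κ`. -/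
theorem statement_7 (γ qbar₁ κ : ℝ) (hγ : 0 < γ) (hq : 0 < qbar₁) :
    ((γ ^ 2 * κ * qbar₁ ^ 2 +
        Real.sqrt (γ ^ 4 * κ ^ 2 * qbar₁ ^ 4 + 4 * (γ + 1) ^ 2 * qbar₁ ^ 2)) / 2
        = (γ + 1) * qbar₁ ↔ κ = 0) ∧
    ((γ ^ 2 * κ * qbar₁ ^ 2 +
        Real.sqrt (γ ^ 4 * κ ^ 2 * qbar₁ ^ 4 + 4 * (γ + 1) ^ 2 * qbar₁ ^ 2)) / 2
        > (γ + 1) * qbar₁ ↔ 0 < κ) ∧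
    ((γ ^ 2 * κ * qbar₁ ^ 2 +
        Real.sqrt (γ ^ 4 * κ ^ 2 * qbar₁ ^ 4 + 4 * (γ + 1) ^ 2 * qbar₁ ^ 2)) / 2
        < (γ + 1) * qbar₁ ↔ κ < 0) := by
  have hq₂ : 0 < (γ + 1) * qbar₁ := by positivity
  exact eq_gt_lt_iff_of_sign_sub_eq_sign (statement_7_general hγ.ne' hq₂)
end

section
/- For every real a ≥ 0, the integral ∫₀¹ (1−2r)/√((1−r)·(1 + a·r^{−3/2})) dr is less than or equal to 0. -/
open Real intervalIntegral

/-!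
On `(0, 1)` the integrand is the product of `f r = (1 - 2r) / √(1 - r)`, which changes sign from
`+` to `-` at `r = 1/2`, and of the weight `w r = (√(1 + a * r ^ p))⁻¹`, which is nondecreasing for
every exponent `p ≤ 0`, in particular for `p = -3/2`. Hence `f r * w r ≤ f r * w (1/2)` on both
sides of `1/2`, so the integral is at most `w (1/2) * ∫ f = -(2/3) * w (1/2)`.
-/

section SignChange

theorem mul_le_mul_of_monotoneOn_of_sign_change {R S : Type*} [LinearOrder R] [Ring S]
    [PartialOrder S] [IsOrderedRing S] {f w : R → S} {s : Set R} {c x : R} (hw : MonotoneOn w s)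
    (hc : c ∈ s) (hx : x ∈ s) (hpos : x < c → 0 ≤ f x) (hneg : c < x → f x ≤ 0) :
    f x * w x ≤ f x * w c := by
  rcases lt_trichotomy x c with hxc | rfl | hcx
  · exact mul_le_mul_of_nonneg_left (hw hx hc hxc.le) (hpos hxc)
  · exact le_rfl
  · exact mul_le_mul_of_nonpos_left (hw hc hx hcx.le) (hneg hcx)

theorem integral_mul_le_integral_mul_of_monotoneOn_of_sign_change {μ : MeasureTheory.Measure ℝ}
    [MeasureTheory.NullSingletonClass μ] {f w : ℝ → ℝ} {a b c : ℝ} (hc : c ∈ Set.Ioo a b)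
    (hf : IntervalIntegrable f μ a b) (hfw : IntervalIntegrable (fun x ↦ f x * w x) μ a b)
    (hw : MonotoneOn w (Set.Ioo a b)) (hpos : ∀ x ∈ Set.Ioo a c, 0 ≤ f x)
    (hneg : ∀ x ∈ Set.Ioo c b, f x ≤ 0) :
    ∫ x in a..b, f x * w x ∂μ ≤ (∫ x in a..b, f x ∂μ) * w c := by
  rw [← integral_mul_const]
  refine integral_mono_on_of_le_Ioo (hc.1.trans hc.2).le hfw (hf.mul_const _) fun x hx ↦ ?_
  exact mul_le_mul_of_monotoneOn_of_sign_change hw hc hx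
    (fun hxc ↦ hpos x ⟨hx.1, hxc⟩) (fun hcx ↦ hneg x ⟨hcx, hx.2⟩)

end SignChange

section Weight

variable {a p : ℝ}

theorem monotoneOn_inv_sqrt_one_add_mul_rpow (ha : 0 ≤ a) (hp : p ≤ 0) :
    MonotoneOn (fun r : ℝ ↦ (√(1 + a * r ^ p))⁻¹) (Set.Ioi 0) := by
  intro x (hx : 0 < x) y (hy : 0 < y) hxy
  have hpow : y ^ p ≤ x ^ p := rpow_le_rpow_of_nonpos hx hxy hp
  dsimp only
  gcongr

theorem inv_sqrt_one_add_mul_rpow_le_one {r : ℝ} (ha : 0 ≤ a) (hr : 0 ≤ r) :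
    (√(1 + a * r ^ p))⁻¹ ≤ 1 :=
  inv_le_one_of_one_le₀ <| one_le_sqrt.2 <| le_add_of_nonneg_right <|
    mul_nonneg ha (rpow_nonneg hr p)

theorem intervalIntegrable_mul_inv_sqrt_one_add_mul_rpow {μ : MeasureTheory.Measure ℝ}
    {f : ℝ → ℝ} {b c : ℝ} (hf : IntervalIntegrable f μ b c) (ha : 0 ≤ a) (hb : 0 ≤ b)
    (hc : 0 ≤ c) :
    IntervalIntegrable (fun r ↦ f r * (√(1 + a * r ^ p))⁻¹) μ b c := by
  have hmeas : Measurable fun r : ℝ ↦ (√(1 + a * r ^ p))⁻¹ := by fun_prop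
  rw [intervalIntegrable_iff] at hf ⊢
  refine hf.mul_bdd (c := 1) hmeas.aestronglyMeasurable ?_
  refine MeasureTheory.ae_restrict_of_forall_mem measurableSet_uIoc fun r hr ↦ ?_
  rw [norm_of_nonneg (by positivity)]
  exact inv_sqrt_one_add_mul_rpow_le_one ha ((le_min hb hc).trans hr.1.le)

end Weight

section UnweightedIntegral

-- For `x < 0` both sides take the junk value `0`.
theorem rpow_neg_half_eq_inv_sqrt (x : ℝ) : x ^ (-(1 / 2) : ℝ) = (√x)⁻¹ := by
  rcases le_or_gt 0 x with hx | hx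
  · rw [rpow_neg hx, sqrt_eq_rpow]
  · have hcos : cos (-(1 / 2) * π) = 0 := by
      rw [neg_mul, cos_neg, one_div_mul_eq_div, cos_pi_div_two]
    rw [rpow_def_of_neg hx, hcos, mul_zero, sqrt_eq_zero_of_nonpos hx.le, inv_zero]

theorem intervalIntegrable_inv_sqrt (a b : ℝ) :
    IntervalIntegrable (fun x ↦ (√x)⁻¹) MeasureTheory.volume a b := by
  simpa only [rpow_neg_half_eq_inv_sqrt] using
    intervalIntegrable_rpow' (a := a) (b := b) (r := -(1 / 2)) (by norm_num)

theorem integral_inv_sqrt (a b : ℝ) : ∫ x in a..b, (√x)⁻¹ = 2 * (√b - √a) := by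
  simp only [← rpow_neg_half_eq_inv_sqrt]
  rw [integral_rpow (Or.inl (by norm_num)), show (-(1 / 2) + 1 : ℝ) = 1 / 2 by norm_num,
    ← sqrt_eq_rpow, ← sqrt_eq_rpow]
  ring

theorem integral_sqrt_zero_one : ∫ x in (0 : ℝ)..1, √x = 2 / 3 := by
  simp only [sqrt_eq_rpow]
  rw [integral_rpow (Or.inl (by norm_num))]
  norm_num

theorem one_sub_two_mul_div_sqrt_one_sub (r : ℝ) :
    (1 - 2 * r) / √(1 - r) = 2 * √(1 - r) - (√(1 - r))⁻¹ := by
  rw [show 1 - 2 * r = 2 * (1 - r) - 1 by ring, sub_div, mul_div_assoc, div_sqrt, one_div]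

theorem intervalIntegrable_one_sub_two_mul_div_sqrt_one_sub (a b : ℝ) :
    IntervalIntegrable (fun r ↦ (1 - 2 * r) / √(1 - r)) MeasureTheory.volume a b := by
  have hsqrt : IntervalIntegrable (fun r ↦ 2 * √(1 - r)) MeasureTheory.volume a b :=
    Continuous.intervalIntegrable (by fun_prop) a b
  have hinv := (intervalIntegrable_inv_sqrt (1 - a) (1 - b)).comp_sub_left 1
  simp only [sub_sub_cancel] at hinv
  simpa only [one_sub_two_mul_div_sqrt_one_sub] using hsqrt.sub hinv

theorem integral_one_sub_two_mul_div_sqrt_one_sub :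
    ∫ r in (0 : ℝ)..1, (1 - 2 * r) / √(1 - r) = -(2 / 3) := by
  calc ∫ r in (0 : ℝ)..1, (1 - 2 * r) / √(1 - r)
      = ∫ r in (0 : ℝ)..1, (2 * √(1 - r) - (√(1 - r))⁻¹) := by
        simp only [one_sub_two_mul_div_sqrt_one_sub]
    _ = ∫ u in (0 : ℝ)..1, (2 * √u - (√u)⁻¹) := by
        rw [integral_comp_sub_left (fun u ↦ 2 * √u - (√u)⁻¹) 1, sub_self, sub_zero]
    _ = 2 * (2 / 3) - 2 * (√1 - √0) := by
        rw [integral_sub (Continuous.intervalIntegrable (by fun_prop) 0 1)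
          (intervalIntegrable_inv_sqrt 0 1), integral_const_mul, integral_sqrt_zero_one,
          integral_inv_sqrt]
    _ = -(2 / 3) := by norm_num

end UnweightedIntegral

theorem div_sqrt_mul_eq_div_sqrt_mul_inv_sqrt {u : ℝ} (hu : 0 ≤ u) (x v : ℝ) :
    x / √(u * v) = x / √u * (√v)⁻¹ := by
  rw [sqrt_mul hu, ← div_div, div_eq_mul_inv _ √v]

theorem integral_one_sub_two_mul_div_sqrt_mul_le {a p : ℝ} (ha : 0 ≤ a) (hp : p ≤ 0) :
    ∫ r in (0 : ℝ)..1, (1 - 2 * r) / √((1 - r) * (1 + a * r ^ p)) ≤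
      -(2 / 3) * (√(1 + a * (1 / 2) ^ p))⁻¹ := by
  have hf := intervalIntegrable_one_sub_two_mul_div_sqrt_one_sub 0 1
  have hfactor : ∀ r ∈ Set.uIcc (0 : ℝ) 1, (1 - 2 * r) / √((1 - r) * (1 + a * r ^ p)) =
      (1 - 2 * r) / √(1 - r) * (√(1 + a * r ^ p))⁻¹ := by
    intro r hr
    rw [Set.uIcc_of_le zero_le_one] at hr
    exact div_sqrt_mul_eq_div_sqrt_mul_inv_sqrt (sub_nonneg.2 hr.2) _ _
  rw [integral_congr hfactor, ← integral_one_sub_two_mul_div_sqrt_one_sub]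
  refine integral_mul_le_integral_mul_of_monotoneOn_of_sign_change (c := 1 / 2)
    (w := fun r ↦ (√(1 + a * r ^ p))⁻¹) (by norm_num) hf
    (intervalIntegrable_mul_inv_sqrt_one_add_mul_rpow hf ha le_rfl zero_le_one)
    ((monotoneOn_inv_sqrt_one_add_mul_rpow ha hp).mono Set.Ioo_subset_Ioi_self) ?_ ?_
  · exact fun r hr ↦ div_nonneg (by linarith [hr.2]) (sqrt_nonneg _)
  · exact fun r hr ↦ div_nonpos_of_nonpos_of_nonneg (by linarith [hr.1]) (sqrt_nonneg _)

theorem statement_15_general {a p : ℝ} (ha : 0 ≤ a) (hp : p ≤ 0) :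
    ∫ r in (0 : ℝ)..1, (1 - 2 * r) / √((1 - r) * (1 + a * r ^ p)) ≤ 0 :=
  (integral_one_sub_two_mul_div_sqrt_mul_le ha hp).trans <|
    mul_nonpos_of_nonpos_of_nonneg (by norm_num) (by positivity)

/-- For every `a ≥ 0`, `∫₀¹ (1−2r)/√((1−r)(1 + a·r^{−3/2})) dr ≤ 0`. -/
theorem statement_15 (a : ℝ) (ha : 0 ≤ a) :
    (∫ r in (0:ℝ)..1, (1 - 2 * r) /
      Real.sqrt ((1 - r) * (1 + a * r ^ (-(3:ℝ)/2)))) ≤ 0 :=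
  statement_15_general ha (by norm_num)
end

section
/- The lemniscatic constant satisfies ϖ = Γ(1/4)²/√(8π); that is, 2∫₀¹ dt/√(1−t⁴) = Γ(1/4)²/√(8π). -/
open Real intervalIntegral

/-
The substitution `u = t ^ p` turns `∫₀¹ (1 - t ^ p) ^ (b - 1) dt` into the beta integral
`B(1 / p, b) / p`. For `p = 4`, `b = 1 / 2` this gives `ϖ = √π Γ(1/4) / (2 Γ(3/4))`, and the
reflection formula `Γ(1/4) Γ(3/4) = π √2` eliminates `Γ(3/4)`.
-/

theorem integral_rpow_smul_comp_rpow {E : Type*} [NormedAddCommGroup E] [NormedSpace ℝ E]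
    {a b p : ℝ} (ha : 0 ≤ a) (hb : 0 ≤ b) (hp : 0 < p) (g : ℝ → E) :
    ∫ t in a..b, (p * t ^ (p - 1)) • g (t ^ p) = ∫ u in a ^ p..b ^ p, g u := by
  have pos_of_mem {t : ℝ} (ht : t ∈ Set.Ioo (min a b) (max a b)) : 0 < t :=
    (le_min ha hb).trans_lt ht.1
  exact integral_deriv_smul_comp_of_deriv_nonneg (continuous_rpow_const hp.le).continuousOn
    (fun t ht ↦ hasDerivAt_rpow_const (Or.inl (pos_of_mem ht).ne'))
    (fun t ht ↦ mul_nonneg hp.le (rpow_nonneg (pos_of_mem ht).le _))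

theorem integral_rpow_mul_one_sub_rpow_s18 {a b : ℝ} (ha : 0 < a) (hb : 0 < b) :
    ∫ u in (0 : ℝ)..1, u ^ (a - 1) * (1 - u) ^ (b - 1) = ProbabilityTheory.beta a b := by
  have betaIntegral_eq : Complex.betaIntegral a b =
      ((∫ u in (0 : ℝ)..1, u ^ (a - 1) * (1 - u) ^ (b - 1) : ℝ) : ℂ) := by
    rw [Complex.betaIntegral, ← intervalIntegral.integral_ofReal]
    refine integral_congr_Ioo_of_le zero_le_one fun u hu ↦ ?_
    push_cast [Complex.ofReal_cpow hu.1.le, Complex.ofReal_cpow (sub_pos.2 hu.2).le]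
    rfl
  rw [ProbabilityTheory.beta_eq_betaIntegralReal a b ha hb, betaIntegral_eq, Complex.ofReal_re]

theorem integral_rpow_mul_one_sub_rpow_rpow {a b p : ℝ} (ha : 0 < a) (hb : 0 < b) (hp : 0 < p) :
    ∫ t in (0 : ℝ)..1, t ^ (a - 1) * (1 - t ^ p) ^ (b - 1) =
      ProbabilityTheory.beta (a / p) b / p := by
  have subst := integral_rpow_smul_comp_rpow le_rfl zero_le_one hp
    fun u : ℝ ↦ u ^ (a / p - 1) * (1 - u) ^ (b - 1)
  rw [zero_rpow hp.ne', one_rpow, integral_rpow_mul_one_sub_rpow_s18 (div_pos ha hp) hb] at subst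
  rw [← subst, eq_div_iff hp.ne', ← intervalIntegral.integral_mul_const]
  refine integral_congr_Ioo_of_le zero_le_one fun t ht ↦ ?_
  have rpow_eq : t ^ (a - 1) = t ^ (p - 1) * (t ^ p) ^ (a / p - 1) := by
    rw [← rpow_mul ht.1.le, ← rpow_add ht.1]
    congr 1
    field_simp
    ring
  simp only [rpow_eq, smul_eq_mul]
  ring

theorem integral_one_div_sqrt_one_sub_rpow {p : ℝ} (hp : 0 < p) :
    ∫ t in (0 : ℝ)..1, 1 / √(1 - t ^ p) = √π * Gamma (1 / p) / (p * Gamma (1 / p + 1 / 2)) := by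
  calc ∫ t in (0 : ℝ)..1, 1 / √(1 - t ^ p)
      = ∫ t in (0 : ℝ)..1, t ^ ((1 : ℝ) - 1) * (1 - t ^ p) ^ ((1 / 2 : ℝ) - 1) := by
        refine integral_congr_Ioo_of_le zero_le_one fun t ht ↦ ?_
        have one_sub_nonneg : 0 ≤ 1 - t ^ p := sub_nonneg.2 (rpow_le_one ht.1.le ht.2.le hp.le)
        simp only [sub_self, rpow_zero, one_mul]
        rw [show (1 / 2 : ℝ) - 1 = -(1 / 2) by norm_num, rpow_neg one_sub_nonneg, ← sqrt_eq_rpow,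
          one_div]
    _ = ProbabilityTheory.beta (1 / p) (1 / 2) / p :=
        integral_rpow_mul_one_sub_rpow_rpow one_pos one_half_pos hp
    _ = √π * Gamma (1 / p) / (p * Gamma (1 / p + 1 / 2)) := by
        rw [ProbabilityTheory.beta, Gamma_one_half_eq, div_div]
        ring

theorem varpi_eq_sqrt_pi_mul_Gamma_div_Gamma :
    varpi = √π * Gamma (1 / 4) / (2 * Gamma (3 / 4)) := by
  have integral_eq := integral_one_div_sqrt_one_sub_rpow (p := 4) (by norm_num)
  simp only [rpow_ofNat] at integral_eq
  rw [varpi, integral_eq, show (1 / 4 + 1 / 2 : ℝ) = 3 / 4 by norm_num]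
  ring

theorem Gamma_one_fourth_mul_Gamma_three_fourths : Gamma (1 / 4) * Gamma (3 / 4) = π * √2 := by
  have reflection := Gamma_mul_Gamma_one_sub (1 / 4)
  rw [show π * (1 / 4) = π / 4 by ring, sin_pi_div_four,
    show (1 - 1 / 4 : ℝ) = 3 / 4 by norm_num] at reflection
  rw [reflection, div_div_eq_mul_div, mul_div_assoc, div_sqrt]

/-- The lemniscatic constant satisfies `ϖ = Γ(1/4)²/√(8π)`. -/
theorem statement_18 : varpi = Real.Gamma (1/4) ^ 2 / Real.sqrt (8 * π) := by
  have sqrt_mul_sqrt_eq : √π * √(8 * π) = 2 * (π * √2) := by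
    rw [← sqrt_mul pi_pos.le, show π * (8 * π) = (2 * π) ^ 2 * 2 by ring,
      sqrt_mul (sq_nonneg _), sqrt_sq two_pi_pos.le, mul_assoc]
  rw [varpi_eq_sqrt_pi_mul_Gamma_div_Gamma, div_eq_div_iff (by positivity) (by positivity)]
  calc √π * Gamma (1 / 4) * √(8 * π)
      = Gamma (1 / 4) * (√π * √(8 * π)) := by ring
    _ = Gamma (1 / 4) * (2 * (Gamma (1 / 4) * Gamma (3 / 4))) := by
        rw [sqrt_mul_sqrt_eq, Gamma_one_fourth_mul_Gamma_three_fourths]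
    _ = Gamma (1 / 4) ^ 2 * (2 * Gamma (3 / 4)) := by ring
end
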